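/- arXiv:1504.08282 — 2 statements merged into one kernel-verified Lean document; each statement's English description precedes it below -/
import Mathlib

section
/- Let Λ be an artin algebra, P the class of finitely generated right Λ-modules of finite projective dimension, assumed contravariantly finite. Let I_1, …, I_n be a complete set of non-isomorphic indecomposable injective Λ-modules and f_j : A_j → I_j their minimal right P-approximations. Then the set of indecomposable splitting injective modules in P equals the union over j of the sets of indecomposable direct summands of the A_j. -/
open CategoryTheory

universe u

/-- The `n`-th Ext group of `A`-modules `M`, `N`. -/
noncomputable abbrev ext {A : Type u} [Ring A] (M N : ModuleCat.{u} A) (n : ℕ) : Type u :=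
  ((Ext ℤ (ModuleCat.{u} A) n).obj (Opposite.op M)).obj N

/-- `Ext^i(N, M) = 0` for all `i > 0`. -/
def ExtVanish {A : Type u} [Ring A] (N M : ModuleCat.{u} A) : Prop :=
  ∀ i, 0 < i → Subsingleton (ext N M i)

/-- `M` has projective dimension at most `n`, i.e. `Ext^i(M, -) = 0` for `i > n`. -/
def pdLE {A : Type u} [Ring A] (M : ModuleCat.{u} A) (n : ℕ) : Prop :=
  ∀ i, n < i → ∀ N : ModuleCat.{u} A, Subsingleton (ext M N i)

/-- The projective dimension of `M`, as an element of `ℕ∞` (`⊤` if infinite). -/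
noncomputable def projDim {A : Type u} [Ring A] (M : ModuleCat.{u} A) : ℕ∞ :=
  sInf {d : ℕ∞ | ∃ n : ℕ, d = n ∧ pdLE M n}

/-- Membership in `𝒫`: finitely generated of finite projective dimension. -/
def InP {A : Type u} [Ring A] (M : ModuleCat.{u} A) : Prop :=
  Module.Finite A M ∧ ∃ n, pdLE M n

/-- The finitistic dimension of `A`. -/
noncomputable def findim (A : Type u) [Ring A] : ℕ∞ :=
  sSup {d : ℕ∞ | ∃ M : ModuleCat.{u} A, InP M ∧ d = projDim M}

/-- `M` is a direct summand of `S`. -/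
def IsSummand {A : Type u} [Ring A] (M S : ModuleCat.{u} A) : Prop :=
  ∃ (s : M →ₗ[A] S) (r : S →ₗ[A] M), r ∘ₗ s = LinearMap.id

/-- `M` belongs to `add 𝒳`: `M` is a direct summand of a finite direct sum of objects of `𝒳`. -/
def InAddOf {A : Type u} [Ring A] (X : ModuleCat.{u} A → Prop) (M : ModuleCat.{u} A) : Prop :=
  ∃ (k : ℕ) (F : Fin k → ModuleCat.{u} A), (∀ i, X (F i)) ∧
    IsSummand M (ModuleCat.of A (DirectSum (Fin k) (fun i => ↥(F i))))

/-- `M` belongs to `Add T`: `M` is a direct summand of an arbitrary direct sum of copies of `T`. -/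
def InAdd {A : Type u} [Ring A] (T M : ModuleCat.{u} A) : Prop :=
  ∃ ι : Type u, IsSummand M (ModuleCat.of A (DirectSum ι (fun _ => ↥T)))

/-- `M ∈ 𝒳^⊥`: `Ext^i(N, M) = 0` for all `N ∈ 𝒳` and `i > 0`. -/
def InPerpOf {A : Type u} [Ring A] (X : ModuleCat.{u} A → Prop) (M : ModuleCat.{u} A) : Prop :=
  ∀ N, X N → ExtVanish N M

/-- `M` is Ext-injective in `𝒫`: `M ∈ 𝒫` and `Ext^1(N, M) = 0` for all `N ∈ 𝒫`. -/
def ExtInjInP {A : Type u} [Ring A] (M : ModuleCat.{u} A) : Prop :=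
  InP M ∧ ∀ N : ModuleCat.{u} A, InP N → Subsingleton (ext N M 1)

/-- `M` is splitting injective in `𝒳`: every injective map `M → Y` with `Y ∈ add 𝒳` splits. -/
def SplittingInjIn {A : Type u} [Ring A] (X : ModuleCat.{u} A → Prop)
    (M : ModuleCat.{u} A) : Prop :=
  ∀ Y : ModuleCat.{u} A, InAddOf X Y → ∀ f : M →ₗ[A] Y, Function.Injective f →
    ∃ r : Y →ₗ[A] M, r ∘ₗ f = LinearMap.id

/-- `0 → M₁ → M₂ → M₃ → 0` is a short exact sequence. -/
def ShortExact {A : Type u} [Ring A] {M₁ M₂ M₃ : ModuleCat.{u} A}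
    (f : M₁ →ₗ[A] M₂) (g : M₂ →ₗ[A] M₃) : Prop :=
  Function.Injective f ∧ Function.Exact f g ∧ Function.Surjective g

/-- `f : XM → M` is a right `𝒳`-approximation of `M`. -/
def IsRightApprox {A : Type u} [Ring A] (X : ModuleCat.{u} A → Prop)
    {XM M : ModuleCat.{u} A} (f : XM →ₗ[A] M) : Prop :=
  X XM ∧ ∀ Y : ModuleCat.{u} A, X Y → ∀ g : Y →ₗ[A] M, ∃ h : Y →ₗ[A] XM, f ∘ₗ h = g

/-- `f : XM → M` is a minimal right `𝒳`-approximation. -/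
def IsMinimalRightApprox {A : Type u} [Ring A] (X : ModuleCat.{u} A → Prop)
    {XM M : ModuleCat.{u} A} (f : XM →ₗ[A] M) : Prop :=
  IsRightApprox X f ∧ ∀ g : XM →ₗ[A] XM, f ∘ₗ g = f → Function.Bijective g

/-- `𝒳` is contravariantly finite in `mod A`. -/
def ContravariantlyFinite {A : Type u} [Ring A] (X : ModuleCat.{u} A → Prop) : Prop :=
  ∀ M : ModuleCat.{u} A, Module.Finite A M →
    ∃ (XM : ModuleCat.{u} A) (f : XM →ₗ[A] M), IsRightApprox X f

/-- `M` is an indecomposable module: nonzero, and its only idempotent endomorphisms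
are `0` and the identity. -/
def Indec {A : Type u} [Ring A] (M : ModuleCat.{u} A) : Prop :=
  (¬ Subsingleton M) ∧ ∀ e : M →ₗ[A] M, e ∘ₗ e = e → e = 0 ∨ e = LinearMap.id

/-- `L` admits a finite coresolution `0 → L → C^0 → ⋯ → C^n → 0` with all `C^i ∈ add T`. -/
def HasAddCoresolution {A : Type u} [Ring A] (T L : ModuleCat.{u} A) : Prop :=
  ∃ (C : ℕ → ModuleCat.{u} A) (d : ∀ i, C i →ₗ[A] C (i+1)) (f : L →ₗ[A] C 0),
    Function.Injective f ∧ Function.Exact f (d 0) ∧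
    (∀ i, Function.Exact (d i) (d (i+1))) ∧
    (∀ i, InAddOf (fun X => X = T) (C i)) ∧
    (∃ m, ∀ i, m ≤ i → Subsingleton (C i))

/-- `T` is a tilting `A`-module. -/
def IsTilting {A : Type u} [Ring A] (T : ModuleCat.{u} A) : Prop :=
  Module.Finite A T ∧ (∃ n, pdLE T n) ∧ ExtVanish T T ∧
    HasAddCoresolution T (ModuleCat.of A A)

/-- `𝒳` is a resolving subcategory of `mod A`. -/
def Resolving {A : Type u} [Ring A] (X : ModuleCat.{u} A → Prop) : Prop :=
  (∀ M : ModuleCat.{u} A, Module.Finite A M → Module.Projective A M → X M) ∧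
  (∀ (M₁ M₂ M₃ : ModuleCat.{u} A) (f : M₁ →ₗ[A] M₂) (g : M₂ →ₗ[A] M₃),
      ShortExact f g → X M₁ → X M₃ → X M₂) ∧
  (∀ (M₁ M₂ M₃ : ModuleCat.{u} A) (f : M₁ →ₗ[A] M₂) (g : M₂ →ₗ[A] M₃),
      ShortExact f g → X M₂ → X M₃ → X M₁)

/-- `F` is a complete irredundant family of representatives of the isomorphism classes of
indecomposable Ext-injective modules in `𝒫`. -/
def IsCompleteExtInjFamily {A : Type u} [Ring A] {ι : Type u}
    (F : ι → ModuleCat.{u} A) : Prop :=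
  (∀ i, Indec (F i) ∧ ExtInjInP (F i)) ∧
  (∀ M : ModuleCat.{u} A, Indec M → ExtInjInP M → ∃ i, Nonempty (M ≃ₗ[A] F i)) ∧
  (∀ i j, Nonempty (F i ≃ₗ[A] F j) → i = j)

/-- `I` is a complete set of pairwise non-isomorphic indecomposable injective modules. -/
def IsCompleteIndecInjFamily {A : Type u} [Ring A] {n : ℕ}
    (I : Fin n → ModuleCat.{u} A) : Prop :=
  (∀ j, Module.Finite A (I j) ∧ Module.Injective A (I j) ∧ Indec (I j)) ∧
  (∀ M : ModuleCat.{u} A, Module.Finite A M → Module.Injective A M → Indec M →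
      ∃ j, Nonempty (M ≃ₗ[A] I j)) ∧
  (∀ j k, Nonempty (I j ≃ₗ[A] I k) → j = k)


section Essential

variable {A : Type u} [Ring A] {Q : Type u} [AddCommGroup Q] [Module A Q]

theorem Submodule.exists_le_maximal_disjoint (N K₀ : Submodule A Q) (h : Disjoint K₀ N) :
    ∃ K, K₀ ≤ K ∧ Maximal (fun K => Disjoint K N) K := by
  refine zorn_le_nonempty₀ {K | Disjoint K N} (fun c hc hchain y hy => ?_) K₀ h
  refine ⟨sSup c, ?_, fun z hz => le_sSup hz⟩
  exact (hchain.directedOn).disjoint_sSup_left.2 fun K hK => hc hK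

theorem Module.Injective.of_retract {E : Type u} [AddCommGroup E] [Module A E]
    [Module.Injective A Q] (i : E →ₗ[A] Q) (p : Q →ₗ[A] E) (hp : p ∘ₗ i = LinearMap.id) :
    Module.Injective A E where
  out X Y _ _ _ _ f hf g := by
    obtain ⟨h, hh⟩ := Module.Injective.out f hf (i ∘ₗ g)
    refine ⟨p ∘ₗ h, fun x => ?_⟩
    simpa [hh] using LinearMap.congr_fun hp (g x)

/-- Every submodule of an injective module has an injective essential extension inside it. -/
theorem Submodule.exists_injective_essential [Module.Injective A Q] (S : Submodule A Q) :
    ∃ E : Submodule A Q, S ≤ E ∧ Module.Injective A E ∧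
      ∀ N ≤ E, Disjoint N S → N = ⊥ := by
  obtain ⟨K, -, hK⟩ := S.exists_le_maximal_disjoint ⊥ disjoint_bot_left
  obtain ⟨E, hSE, hE⟩ := K.exists_le_maximal_disjoint S hK.1.symm
  have hess : ∀ N ≤ E, Disjoint N S → N = ⊥ := by
    intro N hN hNS
    have hsup : Disjoint (N ⊔ K) S := by
      rw [Submodule.disjoint_def] at hNS ⊢
      intro x hx hxS
      obtain ⟨n, hn, k, hk, rfl⟩ := Submodule.mem_sup.1 hx
      have hkE : k ∈ E := by simpa using E.sub_mem (hSE hxS) (hN hn)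
      have : k = 0 := Submodule.disjoint_def.1 hE.1 k hkE hk
      subst this
      exact hNS _ (by simpa using hn) hxS
    have hNK : N ≤ K := le_sup_left.trans (hK.2 hsup le_sup_right)
    exact le_bot_iff.1 (hE.1 hN hNK)
  have hinj : Function.Injective (K.mkQ ∘ₗ E.subtype) := by
    rw [← LinearMap.ker_eq_bot, LinearMap.ker_eq_bot']
    intro x hx
    have : (x : Q) ∈ K := by simpa using hx
    exact Subtype.ext (Submodule.disjoint_def.1 hE.1 x x.2 this)
  obtain ⟨φ, hφ⟩ := Module.Injective.out (K.mkQ ∘ₗ E.subtype) hinj E.subtype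
  have hφE : ∀ x ∈ E, φ (K.mkQ x) = x := fun x hx => hφ ⟨x, hx⟩
  have hrange : LinearMap.range φ ≤ E := by
    have hle : E ≤ LinearMap.range φ := fun x hx => ⟨_, hφE x hx⟩
    refine hE.2 (show Disjoint (LinearMap.range φ) K from ?_) hle
    rw [Submodule.disjoint_def]
    rintro _ ⟨z, rfl⟩ hzK
    have hcomap : Disjoint (K.comap (φ ∘ₗ K.mkQ)) S := by
      rw [Submodule.disjoint_def]
      intro x hx hxS
      have hxK : φ (K.mkQ x) ∈ K := hx
      rw [hφE x (hSE hxS)] at hxK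
      exact Submodule.disjoint_def.1 hK.1 x hxK hxS
    have hle' : K ≤ K.comap (φ ∘ₗ K.mkQ) := fun x hx => by
      have : K.mkQ x = 0 := by simpa using hx
      simp only [Submodule.mem_comap, LinearMap.comp_apply, this, map_zero, zero_mem]
    obtain ⟨z, rfl⟩ := K.mkQ_surjective z
    have hz : z ∈ K := hK.2 hcomap hle' hzK
    have : K.mkQ z = 0 := by simpa using hz
    rw [this, map_zero]
  refine ⟨E, hSE, ?_, hess⟩
  refine .of_retract E.subtype
    ((φ ∘ₗ K.mkQ).codRestrict E fun x => hrange ⟨_, rfl⟩) ?_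
  ext x
  exact hφE x x.2

end Essential

section Loewy

variable {A : Type u} [Ring A] (J : Ideal A) [J.IsTwoSided]
  (E : Type u) [AddCommGroup E] [Module A E]

/-- The ascending Loewy-type filtration of `E`: the elements killed by `J ^ i`. -/
def killedByPow : ℕ → Submodule A E
  | 0 => ⊥
  | i + 1 =>
    { carrier := {x | ∀ a ∈ J, a • x ∈ killedByPow i}
      zero_mem' := fun a _ => by simp
      add_mem' := fun hx hy a ha => by
        rw [smul_add]
        exact add_mem (hx a ha) (hy a ha)
      smul_mem' := fun b x hx a ha => by
        rw [smul_smul]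
        exact hx _ (J.mul_mem_right b ha) }

variable {E} in
theorem mem_killedByPow_succ {i : ℕ} {x : E} :
    x ∈ killedByPow J E (i + 1) ↔ ∀ a ∈ J, a • x ∈ killedByPow J E i := Iff.rfl

variable {E} in
theorem mem_killedByPow_of_forall (i : ℕ) (x : E) (h : ∀ c ∈ J ^ i, c • x = 0) :
    x ∈ killedByPow J E i := by
  induction i generalizing x with
  | zero => simpa [killedByPow] using h 1 (by rw [Submodule.pow_zero]; exact Submodule.one_le.1 le_rfl)
  | succ i ih =>
    intro a ha
    refine ih _ fun c hc => ?_
    rw [smul_smul]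
    exact h _ (by rw [Submodule.pow_succ]; exact Ideal.mul_mem_mul hc ha)

variable (R : Type u) [CommRing R] [Algebra R A] [Module R E] [IsScalarTower R A E]

theorem isNoetherian_killedByPow (hJ : J.FG)
    (h : IsNoetherian R (killedByPow J E 1)) (i : ℕ) : IsNoetherian R (killedByPow J E i) := by
  obtain ⟨s, rfl⟩ := hJ
  set J := Ideal.span (s : Set A)
  have : SMulCommClass R A E := IsScalarTower.to_smulCommClass
  induction i with
  | zero =>
    change IsNoetherian R (⊥ : Submodule A E)
    infer_instance
  | succ i ih =>
    let g : killedByPow J E (i + 1) →ₗ[R] (s → killedByPow J E i) :=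
      { toFun := fun x a => ⟨(a : A) • (x : E), x.2 a (Ideal.subset_span a.2)⟩
        map_add' := fun x y => by ext a; simp
        map_smul' := fun r x => by ext a; exact smul_comm (a : A) r (x : E) }
    have hle : killedByPow J E 1 ≤ killedByPow J E (i + 1) := fun x hx a ha => by
      have : a • x = 0 := by simpa [killedByPow] using hx a ha
      rw [this]
      exact zero_mem _
    refine isNoetherian_of_range_eq_ker ((Submodule.inclusion hle).restrictScalars R) g ?_
    ext ⟨x, hx⟩
    constructor
    · rintro ⟨⟨y, hy⟩, hyx⟩
      obtain rfl : y = x := congrArg Subtype.val hyx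
      ext a
      exact hy a (Ideal.subset_span a.2)
    · intro hg
      refine ⟨⟨x, fun a ha => ?_⟩, rfl⟩
      have hs : (s : Set A) ⊆ {a | a • x = 0} := fun a ha =>
        congrArg Subtype.val (congrFun hg ⟨a, ha⟩)
      have : J ≤ LinearMap.ker (LinearMap.toSpanSingleton A E x) :=
        Ideal.span_le.2 fun a ha => by simpa using hs ha
      simpa [killedByPow] using this ha

end Loewy

section ArtinAlgebra

variable {A : Type u} [Ring A]

/-- Over an artin algebra, an essential extension of a simple module is finitely generated. -/
theorem finite_of_essential_simple (R : Type u) [CommRing R] [IsArtinianRing R] [Algebra R A]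
    [Module.Finite R A] {E : Type u} [AddCommGroup E] [Module A E]
    (S : Submodule A E) [IsSimpleModule A S] (hS : ∀ N : Submodule A E, Disjoint N S → N = ⊥) :
    Module.Finite A E := by
  have : IsArtinianRing A := .of_finite R A
  let _ : Module R E := Module.compHom E (algebraMap R A)
  have : IsScalarTower R A E := ⟨fun r a x => by
    rw [Algebra.smul_def, mul_smul]; rfl⟩
  let J := Ring.jacobson A
  have htors : Module.IsTorsionBySet A (killedByPow J E 1) J := fun x a =>
    Subtype.ext (x.2 a a.2)
  have hss : IsSemisimpleModule A (killedByPow J E 1) := by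
    let _ := htors.module
    exact htors.isSemisimpleModule_iff.1 inferInstance
  have hle : killedByPow J E 1 ≤ S := by
    obtain ⟨C, hC⟩ := exists_isCompl (S.comap (killedByPow J E 1).subtype)
    have hd : Disjoint (C.map (killedByPow J E 1).subtype) S := by
      rw [Submodule.disjoint_def]
      rintro _ ⟨c, hc, rfl⟩ hcS
      simpa using Submodule.disjoint_def.1 hC.1 c hcS hc
    have hC0 : C = ⊥ :=
      Submodule.map_injective_of_injective (Submodule.injective_subtype _)
        ((hS _ hd).trans (Submodule.map_bot _).symm)
    have htop := hC.sup_eq_top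
    rw [hC0, sup_bot_eq] at htop
    intro x hx
    have : (⟨x, hx⟩ : killedByPow J E 1) ∈ S.comap (killedByPow J E 1).subtype := by
      rw [htop]; trivial
    exact this
  have : Module.Finite R S := .trans A S
  have h1 : IsNoetherian R (killedByPow J E 1) :=
    isNoetherian_of_injective ((Submodule.inclusion hle).restrictScalars R)
      (Submodule.inclusion_injective hle)
  obtain ⟨n, hn⟩ : IsNilpotent J := IsSemiprimaryRing.isNilpotent
  have hfg : J.FG := IsNoetherian.noetherian J
  have hnoeth := isNoetherian_killedByPow J E R hfg h1 n
  have htop : ∀ x, x ∈ killedByPow J E n := fun x =>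
    mem_killedByPow_of_forall J n x fun c hc => by
      rw [hn] at hc
      rw [show c = 0 by simpa using hc, zero_smul]
  have : IsNoetherian R E := isNoetherian_of_surjective
    ((killedByPow J E n).subtype.restrictScalars R) (by
      rw [LinearMap.range_eq_top]
      exact fun x => ⟨⟨x, htop x⟩, rfl⟩)
  exact Module.Finite.of_restrictScalars_finite R A E

theorem indec_of_essential_simple {E : Type u} [AddCommGroup E] [Module A E]
    (S : Submodule A E) [IsSimpleModule A S] (hS : ∀ N : Submodule A E, Disjoint N S → N = ⊥) :
    Indec (ModuleCat.of A E) := by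
  have hatom : IsAtom S := isSimpleModule_iff_isAtom.1 inferInstance
  refine ⟨fun h => hatom.1 ?_, fun e he => ?_⟩
  · have : Subsingleton E := h
    exact Subsingleton.elim _ _
  · change E →ₗ[A] E at e
    have he' : ∀ x, e (e x) = e x := fun x => LinearMap.congr_fun he x
    rcases hatom.le_iff.1 (inf_le_right : LinearMap.ker e ⊓ S ≤ S) with h | h
    · right
      have hinj := LinearMap.ker_eq_bot.1 (hS _ (disjoint_iff.2 h))
      exact LinearMap.ext fun x => hinj (he' x)
    · left
      have hd : Disjoint (LinearMap.range e) S := by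
        rw [Submodule.disjoint_def]
        rintro _ ⟨z, rfl⟩ hz
        rw [← he']
        exact inf_eq_right.1 h hz
      exact LinearMap.range_eq_bot.1 (hS _ hd)

/-- Over an artin algebra, maps to the finitely generated indecomposable injective modules
separate points. -/
theorem exists_map_to_indec_injective (R : Type u) [CommRing R] [IsArtinianRing R] [Algebra R A]
    [Module.Finite R A] {M : Type u} [AddCommGroup M] [Module A M]
    (x : M) (hx : x ≠ 0) :
    ∃ E : ModuleCat.{u} A, Module.Finite A E ∧ Module.Injective A E ∧ Indec E ∧
      ∃ g : M →ₗ[A] E, g x ≠ 0 := by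
  let X := Submodule.span A {x}
  let x' : X := ⟨x, Submodule.mem_span_singleton_self x⟩
  have hx' : x' ≠ 0 := fun h => hx (congrArg Subtype.val h)
  have : Nontrivial X := ⟨x', 0, hx'⟩
  obtain ⟨N, hN⟩ := IsCoatomic.exists_coatom (α := Submodule A X)
  have hS : IsSimpleModule A (X ⧸ N) := isSimpleModule_iff_isCoatom.2 hN
  obtain ⟨⟨Q, hQ, ι, hι⟩⟩ := EnoughInjectives.presentation (ModuleCat.of A (X ⧸ N))
  have hQ' : Module.Injective A Q :=
    Module.injective_module_of_injective_object A Q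
  have hιinj : Function.Injective ι.hom := (ModuleCat.mono_iff_injective ι).1 hι
  let S := LinearMap.range ι.hom
  obtain ⟨E, hSE, hE, hess⟩ := Submodule.exists_injective_essential S
  let S' : Submodule A E := S.comap E.subtype
  have hess' : ∀ N : Submodule A E, Disjoint N S' → N = ⊥ := by
    intro N hN
    refine Submodule.map_injective_of_injective (Submodule.injective_subtype E)
      ((hess _ (Submodule.map_subtype_le E N) ?_).trans (Submodule.map_bot _).symm)
    rw [Submodule.disjoint_def] at hN ⊢
    rintro _ ⟨y, hy, rfl⟩ hyS
    rw [hN y hy hyS, map_zero]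
  have hsimple : IsSimpleModule A S' :=
    .congr ((Submodule.comapSubtypeEquivOfLe hSE).trans (LinearEquiv.ofInjective _ hιinj).symm)
  let g₀ : X →ₗ[A] E :=
    (ι.hom ∘ₗ N.mkQ).codRestrict E fun y => hSE ⟨_, rfl⟩
  obtain ⟨g, hg⟩ := Module.Injective.out X.subtype X.injective_subtype g₀
  refine ⟨ModuleCat.of A E, finite_of_essential_simple R S' hess', hE,
    indec_of_essential_simple S' hess', g, fun h => hN.1 ?_⟩
  have h0 : ι.hom (N.mkQ x') = 0 := by
    have := (hg x').symm.trans h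
    exact congrArg Subtype.val this
  have hx'N : x' ∈ N := by
    simpa using hιinj (h0.trans (map_zero _).symm)
  rw [eq_top_iff]
  rintro ⟨y, hy⟩ -
  obtain ⟨a, rfl⟩ := Submodule.mem_span_singleton.1 hy
  exact N.smul_mem a hx'N

end ArtinAlgebra

section KrullSchmidt

variable {A : Type u} [Ring A] {M : ModuleCat.{u} A}

theorem Indec.isUnit_or_isNilpotent [IsNoetherian A M] [IsArtinian A M] (hM : Indec M)
    (e : Module.End A M) : IsUnit e ∨ IsNilpotent e := by
  obtain ⟨n, hn, hn1⟩ := (e.eventually_isCompl_ker_pow_range_pow.and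
    (Filter.eventually_ge_atTop 1)).exists
  rcases hM.2 _ (Submodule.isIdempotentElem_projection hn) with h | h
  · left
    have hbot : LinearMap.ker (e ^ n) = ⊥ := by
      rw [← Submodule.range_projection hn, h, LinearMap.range_zero]
    have hinj : Function.Injective (e ^ n) := LinearMap.ker_eq_bot.1 hbot
    have hunit : IsUnit (e ^ n) :=
      (Module.End.isUnit_iff _).2 (IsArtinian.bijective_of_injective_endomorphism _ hinj)
    exact (isUnit_pow_iff (Nat.one_le_iff_ne_zero.1 hn1)).1 hunit
  · right
    have hbot : LinearMap.range (e ^ n) = ⊥ := by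
      rw [← Submodule.ker_projection hn, h, LinearMap.ker_id]
    exact ⟨n, LinearMap.range_eq_bot.1 hbot⟩

theorem Indec.isLocalRing_end [IsNoetherian A M] [IsArtinian A M] (hM : Indec M) :
    IsLocalRing (Module.End A M) := by
  have : Nontrivial M := not_subsingleton_iff_nontrivial.1 hM.1
  refine .of_isUnit_or_isUnit_one_sub_self fun e => ?_
  exact (hM.isUnit_or_isNilpotent e).imp_right IsNilpotent.isUnit_one_sub

theorem IsLocalRing.exists_isUnit_of_isUnit_sum {E ι : Type*} [Ring E] [IsLocalRing E]
    (s : Finset ι) (e : ι → E) (h : IsUnit (∑ i ∈ s, e i)) : ∃ i ∈ s, IsUnit (e i) := by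
  classical
  induction s using Finset.induction_on with
  | empty => simp at h
  | insert a s ha ih =>
    rw [Finset.sum_insert ha] at h
    obtain ⟨u, hu⟩ := h
    have h1 : ↑u⁻¹ * e a + ↑u⁻¹ * ∑ i ∈ s, e i = 1 := by
      rw [← mul_add, ← hu, Units.inv_mul]
    rcases IsLocalRing.isUnit_or_isUnit_of_add_one h1 with h | h
    · exact ⟨a, by simp, by simpa using h⟩
    · obtain ⟨i, hi, hu⟩ := ih (by simpa using h)
      exact ⟨i, by simp [hi], hu⟩

end KrullSchmidt

section Retracts

variable {A : Type u} [Ring A]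

theorem pdLE.of_isSummand {M S : ModuleCat.{u} A} {n : ℕ} (h : IsSummand M S) (hS : pdLE S n) :
    pdLE M n := by
  obtain ⟨s, r, hrs⟩ := h
  intro i hi N
  have := hS i hi N
  let F := (Ext ℤ (ModuleCat.{u} A) i).flip.obj N
  have hid : ModuleCat.ofHom s ≫ ModuleCat.ofHom r = 𝟙 M := by
    rw [← ModuleCat.ofHom_comp, hrs]; rfl
  have hF : F.map (ModuleCat.ofHom r).op ≫ F.map (ModuleCat.ofHom s).op = 𝟙 _ := by
    rw [← F.map_comp, ← op_comp, hid, op_id, F.map_id]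
  have hinj : Function.Injective (F.map (ModuleCat.ofHom r).op) :=
    Function.LeftInverse.injective (g := F.map (ModuleCat.ofHom s).op) fun x =>
      ConcreteCategory.congr_hom hF x
  exact Function.Injective.subsingleton (β := ext S N i) hinj

theorem InP.of_isSummand {M S : ModuleCat.{u} A} (h : IsSummand M S) (hS : InP S) : InP M := by
  obtain ⟨hfin, n, hn⟩ := hS
  refine ⟨?_, n, hn.of_isSummand h⟩
  obtain ⟨s, r, hrs⟩ := h
  exact Module.Finite.of_surjective r fun x => ⟨s x, LinearMap.congr_fun hrs x⟩

variable {X : ModuleCat.{u} A → Prop}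

theorem IsRightApprox.exists_lift_of_inAddOf {B I Y : ModuleCat.{u} A} {f : B →ₗ[A] I}
    (hf : IsRightApprox X f) (hY : InAddOf X Y) (g : Y →ₗ[A] I) : ∃ h : Y →ₗ[A] B, f ∘ₗ h = g := by
  classical
  obtain ⟨k, F, hF, s, r, hrs⟩ := hY
  choose h hh using fun i => hf.2 (F i) (hF i) (g ∘ₗ r ∘ₗ DirectSum.lof A (Fin k) (fun i => F i) i)
  refine ⟨DirectSum.toModule A (Fin k) B h ∘ₗ s, ?_⟩
  have key : f ∘ₗ DirectSum.toModule A (Fin k) B h = g ∘ₗ r := by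
    refine DirectSum.linearMap_ext A fun i => ?_
    ext x
    simpa using LinearMap.congr_fun (hh i) x
  rw [← LinearMap.comp_assoc, key, LinearMap.comp_assoc, hrs, LinearMap.comp_id]

theorem IsMinimalRightApprox.splittingInjIn_of_isSummand {B I M : ModuleCat.{u} A}
    [Module.Injective A I] {f : B →ₗ[A] I} (hf : IsMinimalRightApprox X f)
    (hM : IsSummand M B) : SplittingInjIn X M := by
  obtain ⟨s, r, hrs⟩ := hM
  intro Y hY g hg
  obtain ⟨f', hf'⟩ := Module.Injective.out g hg (f ∘ₗ s)
  obtain ⟨h, hh⟩ := hf.1.exists_lift_of_inAddOf hY f'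
  have hrs' : ∀ x, r (s x) = x := LinearMap.congr_fun hrs
  have hh' : ∀ y, f (h y) = f' y := LinearMap.congr_fun hh
  let φ : B →ₗ[A] B := h ∘ₗ g ∘ₗ r + (LinearMap.id - s ∘ₗ r)
  have hφ : Function.Bijective φ := hf.2 φ (by
    ext b
    simp [φ, hh', hf'])
  let ψ := LinearEquiv.ofBijective φ hφ
  refine ⟨r ∘ₗ ψ.symm.toLinearMap ∘ₗ h, LinearMap.ext fun x => ?_⟩
  have : h (g x) = ψ (s x) := by
    simp [ψ, φ, hrs']
  simp [this, hrs']

end Retracts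

theorem isSummand_approx_of_splittingInjIn {A : Type u} [Ring A] {X : ModuleCat.{u} A → Prop}
    {M : ModuleCat.{u} A} [IsNoetherian A M] [IsArtinian A M] (hM : Indec M) (hX : X M)
    (hsplit : SplittingInjIn X M) {n : ℕ} {I B : Fin n → ModuleCat.{u} A}
    {f : ∀ j, B j →ₗ[A] I j} (hf : ∀ j, IsRightApprox X (f j))
    (hsep : ∀ x : M, x ≠ 0 → ∃ j, ∃ g : M →ₗ[A] I j, g x ≠ 0) :
    ∃ j, IsSummand M (B j) := by
  classical
  have hsep' : ∀ x : M, x ≠ 0 → ∃ p : (Σ j, M →ₗ[A] B j), p.2 x ≠ 0 := by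
    intro x hx
    obtain ⟨j, g, hg⟩ := hsep x hx
    obtain ⟨h, rfl⟩ := (hf j).2 M hX g
    exact ⟨⟨j, h⟩, fun h0 => hg (by
      change f j (h x) = 0
      rw [show h x = 0 from h0, map_zero])⟩
  obtain ⟨t, ht⟩ : ∃ t : Finset (Σ j, M →ₗ[A] B j), t.inf (fun p => LinearMap.ker p.2) = ⊥ := by
    obtain ⟨N, ⟨t, rfl⟩, hmin⟩ := IsArtinian.set_has_minimal
      (Set.range fun t : Finset (Σ j, M →ₗ[A] B j) => t.inf (fun p => LinearMap.ker p.2))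
      ⟨_, ∅, rfl⟩
    refine ⟨t, (Submodule.eq_bot_iff _).2 fun x hx => ?_⟩
    by_contra hx0
    obtain ⟨p, hp⟩ := hsep' x hx0
    have hlt := hmin _ ⟨insert p t, rfl⟩
    refine hlt (lt_of_le_of_ne ?_ ?_)
    · exact Finset.inf_mono (Finset.subset_insert p t)
    · intro heq
      dsimp only at heq hx
      rw [← heq, Finset.inf_insert] at hx
      exact hp hx.1
  let e := t.equivFin.symm
  let F : Fin t.card → ModuleCat.{u} A := fun i => B (e i).1.1
  let c : ∀ i, M →ₗ[A] F i := fun i => (e i).1.2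
  let ι : M →ₗ[A] DirectSum (Fin t.card) (fun i => F i) :=
    ∑ i, DirectSum.lof A (Fin t.card) (fun i => F i) i ∘ₗ c i
  have hι : ∀ i x, DirectSum.component A (Fin t.card) (fun i => F i) i (ι x) = c i x := by
    intro i x
    simp only [ι, LinearMap.sum_apply, map_sum, LinearMap.comp_apply]
    rw [Finset.sum_eq_single i]
    · exact DirectSum.component.lof_self A (M := fun i => F i) i (c i x)
    · intro j _ hj
      exact (DirectSum.component.of ..).trans (dif_neg hj)
    · simp
  have hinj : Function.Injective ι := by
    rw [← LinearMap.ker_eq_bot, LinearMap.ker_eq_bot']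
    intro x hx
    have : x ∈ t.inf (fun p : (Σ j, M →ₗ[A] B j) => LinearMap.ker p.2) := by
      rw [Submodule.mem_finsetInf]
      intro p hp
      have h := hι (t.equivFin ⟨p, hp⟩) x
      rw [hx, map_zero] at h
      have hc : ∀ q : t, q = ⟨p, hp⟩ → q.1.2 x = 0 → p.2 x = 0 := by rintro _ rfl h; exact h
      exact hc _ (t.equivFin.symm_apply_apply _) h.symm
    rwa [ht] at this
  obtain ⟨r, hr⟩ := hsplit (ModuleCat.of A (DirectSum (Fin t.card) (fun i => F i)))
    ⟨_, F, fun i => (hf _).1, LinearMap.id, LinearMap.id, rfl⟩ ι hinj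
  have := hM.isLocalRing_end
  obtain ⟨i, -, u, hu⟩ := IsLocalRing.exists_isUnit_of_isUnit_sum (E := Module.End A M) Finset.univ
    (fun i => (r ∘ₗ DirectSum.lof A (Fin t.card) (fun i => F i) i) ∘ₗ c i) (by
      convert isUnit_one
      rw [Module.End.one_eq_id, ← hr]
      ext x
      simp [ι, LinearMap.sum_apply])
  refine ⟨(e i).1.1, c i, (↑u⁻¹ : Module.End A M) ∘ₗ
    (r ∘ₗ DirectSum.lof A (Fin t.card) (fun i => F i) i), ?_⟩
  rw [LinearMap.comp_assoc, ← hu]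
  exact u.inv_mul

/-- If `𝒫` is contravariantly finite, the indecomposable splitting injectives
in `𝒫` are exactly the indecomposable direct summands of the minimal right
`𝒫`-approximations of the indecomposable injective modules. -/
theorem stmt_4 (Λ : Type u) [Ring Λ] (R : Type u) [CommRing R] [IsArtinianRing R]
    [Algebra R Λ] [Module.Finite R Λ]
    (hcf : ContravariantlyFinite (fun M : ModuleCat.{u} Λᵐᵒᵖ => InP M))
    {n : ℕ} (I : Fin n → ModuleCat.{u} Λᵐᵒᵖ) (hI : IsCompleteIndecInjFamily I)
    (A : Fin n → ModuleCat.{u} Λᵐᵒᵖ) (f : ∀ j, A j →ₗ[Λᵐᵒᵖ] I j)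
    (hf : ∀ j, IsMinimalRightApprox InP (f j)) :
    ∀ M : ModuleCat.{u} Λᵐᵒᵖ, Indec M →
      ((InP M ∧ SplittingInjIn InP M) ↔ ∃ j, IsSummand M (A j)) := by
  intro M hM
  have : Module.Finite R Λᵐᵒᵖ := .equiv (MulOpposite.opLinearEquiv R (M := Λ))
  have : IsArtinianRing Λᵐᵒᵖ := .of_finite R Λᵐᵒᵖ
  constructor
  · rintro ⟨hP, hsplit⟩
    have : Module.Finite Λᵐᵒᵖ M := hP.1
    refine isSummand_approx_of_splittingInjIn hM hP hsplit (fun j => (hf j).1) fun x hx => ?_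
    obtain ⟨E, hfin, hinj, hE, g, hg⟩ := exists_map_to_indec_injective (A := Λᵐᵒᵖ) R x hx
    obtain ⟨j, ⟨φ⟩⟩ := hI.2.1 E hfin hinj hE
    exact ⟨j, φ.toLinearMap ∘ₗ g, fun h => hg (φ.injective (h.trans (map_zero φ).symm))⟩
  · rintro ⟨j, hj⟩
    have : Module.Injective Λᵐᵒᵖ (I j) := (hI.1 j).2.1
    exact ⟨(hf j).1.1.of_isSummand hj, (hf j).splittingInjIn_of_isSummand hj⟩
end

section
/- Let Λ be an artin algebra, T a tilting Λ-module, and M ∈ T^⊥. Then there exists, for every n ≥ 1, an exact sequence 0 → K_{n-1} → T_{n-1} → ⋯ → T_1 → T_0 → M → 0 with each T_i ∈ Add T and each kernel K_i = Ker(T_i → T_{i-1}) lying in T^⊥. -/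
open CategoryTheory

universe u

/-- Vanishing in positive degrees of the `Ext` groups computed by deriving `Hom` in the first
variable agrees with that of the `Ext` groups defined by the derived category. -/
lemma subsingleton_ext_succ_iff {A : Type u} [Ring A] (N M : ModuleCat.{u} A) (i : ℕ) :
    Subsingleton (ext N M (i + 1)) ↔ Subsingleton (Abelian.Ext.{u} N M (i + 1)) := by
  let P := ProjectiveResolution.of N
  trans ∀ f : P.complex.X (i + 1) ⟶ M, P.complex.d (i + 2) (i + 1) ≫ f = 0 →
    ∃ g : P.complex.X i ⟶ M, P.complex.d (i + 1) i ≫ g = f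
  · have h₁ : Subsingleton (ext N M (i + 1)) ↔
        Limits.IsZero ((P.complex.linearYonedaObj ℤ M).homology (i + 1)) := by
      rw [← (P.isoExt (R := ℤ) (i + 1) M).isZero_iff]
      exact ⟨fun _ => ModuleCat.isZero_of_subsingleton _,
        fun h => ModuleCat.subsingleton_of_isZero h⟩
    rw [h₁, ← HomologicalComplex.exactAt_iff_isZero_homology,
      HomologicalComplex.exactAt_iff' _ i (i + 1) (i + 2) (by simp) (by simp),
      ShortComplex.moduleCat_exact_iff]
    rfl
  · constructor
    · intro h
      refine subsingleton_of_forall_eq 0 fun α => ?_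
      obtain ⟨f, hf, rfl⟩ := P.extMk_surjective α (i + 2) rfl
      exact (P.extMk_eq_zero_iff f (i + 2) rfl hf i rfl).2 (h f hf)
    · intro h f hf
      exact (P.extMk_eq_zero_iff f (i + 2) rfl hf i rfl).1 (Subsingleton.elim _ _)

lemma extVanish_iff {A : Type u} [Ring A] (N M : ModuleCat.{u} A) :
    ExtVanish N M ↔ ∀ i, Subsingleton (Abelian.Ext.{u} N M (i + 1)) := by
  simp_rw [← subsingleton_ext_succ_iff]
  refine ⟨fun h i => h _ i.succ_pos, fun h i hi => ?_⟩
  obtain ⟨j, rfl⟩ := Nat.exists_eq_add_of_lt hi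
  simpa using h j

/-- A linear map from a finitely generated module to a direct sum has finitely many nonzero
components. -/
lemma exists_finset_component_eq_zero {A : Type u} [Ring A] {N : Type u} [AddCommGroup N]
    [Module A N] [Module.Finite A N] {ι : Type u} {Y : ι → Type u} [∀ j, AddCommGroup (Y j)]
    [∀ j, Module A (Y j)] (f : N →ₗ[A] DirectSum ι Y) :
    ∃ s : Finset ι, ∀ j ∉ s, DirectSum.component A ι Y j ∘ₗ f = 0 := by
  classical
  obtain ⟨S, hS⟩ := Module.Finite.fg_top (R := A) (M := N)
  refine ⟨S.biUnion fun x => (f x).support, fun j hj => ?_⟩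
  refine LinearMap.ext_on hS fun x hx => ?_
  by_contra h
  exact hj (Finset.mem_biUnion.2 ⟨x, hx, DFinsupp.mem_support_iff.2 h⟩)

/-- A short exact sequence `0 → K → P → N → 0` with `P` projective identifies the first
`Ext` group with the cokernel of restriction to `K`. -/
lemma subsingleton_ext_one_iff {A : Type u} [Ring A] {S : ShortComplex (ModuleCat.{u} A)}
    (hS : S.ShortExact) [Projective S.X₂] (Y : ModuleCat.{u} A) :
    Subsingleton (Abelian.Ext.{u} S.X₃ Y 1) ↔ ∀ f : S.X₁ ⟶ Y, ∃ g : S.X₂ ⟶ Y, S.f ≫ g = f := by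
  constructor
  · intro h f
    obtain ⟨x, hx⟩ := Abelian.Ext.contravariant_sequence_exact₁ hS Y (Abelian.Ext.mk₀ f)
      (n₁ := 1) rfl (Subsingleton.elim _ _)
    obtain ⟨g, rfl⟩ := (Abelian.Ext.mk₀_bijective _ _).2 x
    rw [Abelian.Ext.mk₀_comp_mk₀] at hx
    exact ⟨g, (Abelian.Ext.mk₀_bijective _ _).1 hx⟩
  · intro h
    refine subsingleton_of_forall_eq 0 fun x => ?_
    obtain ⟨y, rfl⟩ := Abelian.Ext.contravariant_sequence_exact₃ hS Y x
      (Abelian.Ext.eq_zero_of_projective _) (n₀ := 0) rfl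
    obtain ⟨f, rfl⟩ := (Abelian.Ext.mk₀_bijective _ _).2 y
    obtain ⟨g, rfl⟩ := h f
    rw [← Abelian.Ext.mk₀_comp_mk₀, hS.extClass_comp_assoc]

/-- Dimension shifting along a short exact sequence with projective middle term. -/
lemma subsingleton_ext_succ_succ_iff {A : Type u} [Ring A] {S : ShortComplex (ModuleCat.{u} A)}
    (hS : S.ShortExact) [Projective S.X₂] (Y : ModuleCat.{u} A) (i : ℕ) :
    Subsingleton (Abelian.Ext.{u} S.X₃ Y (i + 2)) ↔
      Subsingleton (Abelian.Ext.{u} S.X₁ Y (i + 1)) := by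
  constructor
  · intro h
    refine subsingleton_of_forall_eq 0 fun x => ?_
    obtain ⟨y, rfl⟩ := Abelian.Ext.contravariant_sequence_exact₁ hS Y x
      (n₁ := i + 2) (by lia) (Subsingleton.elim _ _)
    rw [Abelian.Ext.eq_zero_of_projective y, Abelian.Ext.comp_zero]
  · intro h
    refine subsingleton_of_forall_eq 0 fun x => ?_
    obtain ⟨y, rfl⟩ := Abelian.Ext.contravariant_sequence_exact₃ hS Y x
      (Abelian.Ext.eq_zero_of_projective _) (n₀ := i + 1) (by lia)
    rw [Subsingleton.elim y 0, Abelian.Ext.comp_zero]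

/-- A finitely generated module is a quotient of a finitely generated projective module. -/
lemma exists_finite_projective_surjective {A : Type u} [Ring A] (N : ModuleCat.{u} A)
    [Module.Finite A N] :
    ∃ (P : ModuleCat.{u} A) (e : P →ₗ[A] N),
      Projective P ∧ Module.Finite A P ∧ Function.Surjective e := by
  obtain ⟨k, π, hπ⟩ := Module.Finite.exists_fin' A N
  exact ⟨ModuleCat.of A (Fin k → A), π, ModuleCat.projective_of_free (Pi.basisFun A (Fin k)),
    inferInstanceAs (Module.Finite A (Fin k → A)), hπ⟩

/-- Over a left noetherian ring, vanishing of `Ext` out of a finitely generated module passes to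
direct sums in the second variable. -/
lemma subsingleton_ext_directSum {A : Type u} [Ring A] [IsNoetherianRing A] {ι : Type u}
    (Y : ι → ModuleCat.{u} A) (i : ℕ) (N : ModuleCat.{u} A) [Module.Finite A N]
    (h : ∀ j, Subsingleton (Abelian.Ext.{u} N (Y j) (i + 1))) :
    Subsingleton (Abelian.Ext.{u} N
      (ModuleCat.of A (DirectSum ι fun j => ↥(Y j))) (i + 1)) := by
  classical
  induction i generalizing N with
  | zero =>
    obtain ⟨P, e, hP, _, he⟩ := exists_finite_projective_surjective N
    have hS := LinearMap.shortExact_shortComplexKer he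
    have : Projective e.shortComplexKer.X₂ := hP
    refine (subsingleton_ext_one_iff hS _).2 fun f => ?_
    have : Module.Finite A e.shortComplexKer.X₁ :=
      inferInstanceAs (Module.Finite A (LinearMap.ker e))
    obtain ⟨s, hs⟩ := exists_finset_component_eq_zero f.hom
    choose g hg using fun j => (subsingleton_ext_one_iff hS (Y j)).1 (h j)
      (f ≫ ModuleCat.ofHom (DirectSum.component A ι _ j))
    refine ⟨∑ j ∈ s, g j ≫ ModuleCat.ofHom (DirectSum.lof A ι (fun j => ↥(Y j)) j), ?_⟩
    rw [Preadditive.comp_sum]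
    simp_rw [reassoc_of% hg]
    ext x : 2
    refine DFinsupp.ext fun j => ?_
    have key : ∀ t ∈ s, DirectSum.component A ι (fun j => ↥(Y j)) j
        (DirectSum.lof A ι (fun j => ↥(Y j)) t (DirectSum.component A ι _ t (f.hom x))) =
        if j = t then DirectSum.component A ι (fun j => ↥(Y j)) j (f.hom x) else 0 := by
      intro t _
      split_ifs with hjt
      · subst hjt
        exact DirectSum.component.lof_self A (M := fun j => ↥(Y j)) j _
      · rw [DirectSum.component.of, dif_neg (Ne.symm hjt)]
    have hx : DirectSum.component A ι (fun j => ↥(Y j)) j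
        ((∑ t ∈ s, f ≫ ModuleCat.ofHom (DirectSum.component A ι _ t) ≫
          ModuleCat.ofHom (DirectSum.lof A ι (fun j => ↥(Y j)) t)).hom x) =
        DirectSum.component A ι (fun j => ↥(Y j)) j (f.hom x) := by
      rw [ModuleCat.hom_sum, LinearMap.sum_apply, map_sum]
      refine (Finset.sum_congr rfl key).trans ?_
      rw [Finset.sum_ite_eq]
      split_ifs with hj
      · rfl
      · exact (LinearMap.congr_fun (hs j hj) x).symm
    exact hx
  | succ i ih =>
    obtain ⟨P, e, hP, _, he⟩ := exists_finite_projective_surjective N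
    have hS := LinearMap.shortExact_shortComplexKer he
    have : Projective e.shortComplexKer.X₂ := hP
    have : Module.Finite A e.shortComplexKer.X₁ :=
      inferInstanceAs (Module.Finite A (LinearMap.ker e))
    exact (subsingleton_ext_succ_succ_iff hS _ i).2
      (ih e.shortComplexKer.X₁ fun j => (subsingleton_ext_succ_succ_iff hS _ i).1 (h j))

/-- Vanishing of `Ext` in the first variable passes to `add 𝒳`. -/
lemma InAddOf.extVanish {A : Type u} [Ring A] {X : ModuleCat.{u} A → Prop} {C M : ModuleCat.{u} A}
    (hC : InAddOf X C) (h : ∀ N, X N → ExtVanish N M) : ExtVanish C M := by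
  classical
  obtain ⟨k, F, hF, a, r, har⟩ := hC
  rw [extVanish_iff]
  refine fun i => subsingleton_of_forall_eq 0 fun x => ?_
  have hid : 𝟙 C = ∑ j : Fin k, ModuleCat.ofHom (DirectSum.component A _ _ j ∘ₗ a) ≫
      ModuleCat.ofHom (r ∘ₗ DirectSum.lof A (Fin k) (fun i => ↥(F i)) j) := by
    ext c
    rw [ModuleCat.hom_sum, LinearMap.sum_apply]
    change c = ∑ j : Fin k, r (DirectSum.lof A (Fin k) (fun i => ↥(F i)) j (a c j))
    rw [← map_sum]
    have : ∑ j : Fin k, DirectSum.lof A (Fin k) (fun i => ↥(F i)) j (a c j) = a c :=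
      DirectSum.sum_univ_of (a c)
    rw [this]
    exact (LinearMap.congr_fun har c).symm
  rw [← Abelian.Ext.mk₀_id_comp x, hid, Abelian.Ext.mk₀_sum, Abelian.Ext.sum_comp]
  refine Finset.sum_eq_zero fun j _ => ?_
  have := (extVanish_iff (F j) M).1 (h _ (hF j)) i
  rw [← Abelian.Ext.mk₀_comp_mk₀, Abelian.Ext.comp_assoc _ _ _ (zero_add 0) (zero_add _) (by simp),
    Subsingleton.elim ((Abelian.Ext.mk₀ (ModuleCat.ofHom
      (r ∘ₗ DirectSum.lof A (Fin k) (fun i => ↥(F i)) j))).comp x (zero_add _)) 0,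
    Abelian.Ext.comp_zero]

/-- The short exact sequence of linear maps, as a short exact sequence in `ModuleCat A`. -/
lemma ShortExact.toShortComplex {A : Type u} [Ring A] {M₁ M₂ M₃ : ModuleCat.{u} A}
    {f : M₁ →ₗ[A] M₂} {g : M₂ →ₗ[A] M₃} (h : ShortExact f g) :
    (ModuleCat.shortComplexOfCompEqZero f g h.2.1.linearMap_comp_eq_zero).ShortExact :=
  ModuleCat.shortComplex_shortExact _ h.2.1 h.1 h.2.2

/-- An exact sequence `0 → M₁ → M₂ → M₃ → M₄` gives a short exact sequence ending in the kernel of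
its last map. -/
lemma exists_shortExact_ker {A : Type u} [Ring A] {M₁ M₂ M₃ M₄ : ModuleCat.{u} A}
    {f : M₁ →ₗ[A] M₂} {d : M₂ →ₗ[A] M₃} {d' : M₃ →ₗ[A] M₄} (hf : Function.Injective f)
    (hfd : Function.Exact f d) (hd : Function.Exact d d') :
    ∃ g : M₂ →ₗ[A] ModuleCat.of A (LinearMap.ker d'), ShortExact f g := by
  refine ⟨d.codRestrict (LinearMap.ker d') fun y =>
    LinearMap.mem_ker.2 (hd.apply_apply_eq_zero y), hf, fun y => ?_, ?_⟩
  · exact Subtype.ext_iff.trans (hfd y)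
  · rintro ⟨y, hy⟩
    obtain ⟨z, rfl⟩ := (hd y).1 hy
    exact ⟨z, rfl⟩

/-- `Ext`-vanishing in the first variable passes to kernels of epimorphisms. -/
lemma ShortExact.extVanish_left {A : Type u} [Ring A] {M₁ M₂ M₃ M : ModuleCat.{u} A}
    {f : M₁ →ₗ[A] M₂} {g : M₂ →ₗ[A] M₃} (h : ShortExact f g) (h₂ : ExtVanish M₂ M)
    (h₃ : ExtVanish M₃ M) : ExtVanish M₁ M := by
  rw [extVanish_iff] at *
  refine fun i => subsingleton_of_forall_eq 0 fun x => ?_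
  have := h₂ i
  have := h₃ (i + 1)
  obtain ⟨y, rfl⟩ := Abelian.Ext.contravariant_sequence_exact₁ h.toShortComplex M x
    (n₁ := i + 2) (by lia) (Subsingleton.elim (α := Abelian.Ext.{u} M₃ M (i + 1 + 1)) _ _)
  rw [Subsingleton.elim (α := Abelian.Ext.{u} M₂ M (i + 1)) y 0, Abelian.Ext.comp_zero]

/-- If `Ext^1(M₃, M)` vanishes, every map `M₁ → M` extends to `M₂`. -/
lemma ShortExact.exists_extension {A : Type u} [Ring A] {M₁ M₂ M₃ M : ModuleCat.{u} A}
    {f : M₁ →ₗ[A] M₂} {g : M₂ →ₗ[A] M₃} (h : ShortExact f g) (h₃ : ExtVanish M₃ M)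
    (φ : M₁ →ₗ[A] M) : ∃ ψ : M₂ →ₗ[A] M, ψ ∘ₗ f = φ := by
  rw [extVanish_iff] at h₃
  have := h₃ 0
  obtain ⟨x, hx⟩ := Abelian.Ext.contravariant_sequence_exact₁ h.toShortComplex M
    (Abelian.Ext.mk₀ (ModuleCat.ofHom φ)) (n₁ := 1) rfl
    (Subsingleton.elim (α := Abelian.Ext.{u} M₃ M (0 + 1)) _ _)
  obtain ⟨ψ, rfl⟩ := (Abelian.Ext.mk₀_bijective _ _).2 x
  rw [Abelian.Ext.mk₀_comp_mk₀] at hx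
  exact ⟨ψ.hom, congrArg ModuleCat.Hom.hom ((Abelian.Ext.mk₀_bijective _ _).1 hx)⟩

/-- If all positive `Ext` groups from `T` to `M₂` and `M₃` vanish and every map `T → M₃`
lifts to `M₂`, then those from `T` to the kernel `M₁` vanish too. -/
lemma ShortExact.extVanish_right {A : Type u} [Ring A] {T M₁ M₂ M₃ : ModuleCat.{u} A}
    {f : M₁ →ₗ[A] M₂} {g : M₂ →ₗ[A] M₃} (h : ShortExact f g) (h₂ : ExtVanish T M₂)
    (h₃ : ExtVanish T M₃) (hl : ∀ φ : T →ₗ[A] M₃, ∃ ψ : T →ₗ[A] M₂, g ∘ₗ ψ = φ) :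
    ExtVanish T M₁ := by
  rw [extVanish_iff] at *
  refine fun i => subsingleton_of_forall_eq 0 fun x => ?_
  have := h₂ i
  obtain ⟨y, rfl⟩ := Abelian.Ext.covariant_sequence_exact₁ T h.toShortComplex x
    (Subsingleton.elim (α := Abelian.Ext.{u} T M₂ (i + 1)) _ _) rfl
  cases i with
  | zero =>
    obtain ⟨φ, rfl⟩ := (Abelian.Ext.mk₀_bijective _ _).2 y
    obtain ⟨ψ, hψ⟩ := hl φ.hom
    obtain rfl : ModuleCat.ofHom ψ ≫ ModuleCat.ofHom g = φ := ModuleCat.hom_ext hψ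
    rw [← Abelian.Ext.mk₀_comp_mk₀,
      Abelian.Ext.comp_assoc _ _ _ (zero_add 0) (zero_add _) (by simp)]
    exact (congrArg (fun z => (Abelian.Ext.mk₀ (ModuleCat.ofHom ψ)).comp z (zero_add _))
      h.toShortComplex.comp_extClass).trans (Abelian.Ext.comp_zero _ _ _ _ _)
  | succ i =>
    have := h₃ i
    rw [Subsingleton.elim (α := Abelian.Ext.{u} T M₃ (i + 1)) y 0, Abelian.Ext.zero_comp]

/-- If the regular module has a finite coresolution by `add T` and `M ∈ T^⊥`, then `M` is
generated by the images of maps from `T`. -/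
lemma HasAddCoresolution.mem_span_images {A : Type u} [Ring A] {T M : ModuleCat.{u} A}
    (hT : HasAddCoresolution T (ModuleCat.of A A)) (hM : ExtVanish T M) (x : M) :
    x ∈ ⨆ φ : T →ₗ[A] M, LinearMap.range φ := by
  classical
  obtain ⟨C, d, f, hf, hfd, hd, hC, m, hm⟩ := hT
  have hCM : ∀ j, ExtVanish (C j) M := fun j => (hC j).extVanish fun N hN => hN ▸ hM
  have hker : ∀ j, ExtVanish (ModuleCat.of A (LinearMap.ker (d j))) M := by
    have hlarge : ∀ j, m ≤ j → ExtVanish (ModuleCat.of A (LinearMap.ker (d j))) M := by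
      intro j hj
      have := hm j hj
      have : Subsingleton (LinearMap.ker (d j)) := inferInstance
      rw [extVanish_iff]
      refine fun i => subsingleton_of_forall_eq 0 fun y => ?_
      rw [← Abelian.Ext.mk₀_id_comp y,
        (ModuleCat.isZero_of_subsingleton (ModuleCat.of A (LinearMap.ker (d j)))).eq_of_src
          (𝟙 _) 0, Abelian.Ext.mk₀_zero, Abelian.Ext.zero_comp]
    have hstep : ∀ j, ExtVanish (ModuleCat.of A (LinearMap.ker (d (j + 1)))) M →
        ExtVanish (ModuleCat.of A (LinearMap.ker (d j))) M := by
      intro j hj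
      obtain ⟨g, hS⟩ := exists_shortExact_ker (M₁ := ModuleCat.of A (LinearMap.ker (d j)))
        Subtype.val_injective (LinearMap.exact_subtype_ker_map (d j)) (hd j)
      exact hS.extVanish_left (hCM j) hj
    intro j
    obtain hj | hj := le_total m j
    · exact hlarge j hj
    · exact Nat.decreasingInduction (motive := fun k _ =>
        ExtVanish (ModuleCat.of A (LinearMap.ker (d k))) M) (fun k _ => hstep k)
        (hlarge m le_rfl) hj
  obtain ⟨g, hS⟩ := exists_shortExact_ker hf hfd (hd 0)
  obtain ⟨ψ, hψ⟩ := hS.exists_extension (hker 1) (LinearMap.toSpanSingleton A M x)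
  obtain ⟨k, F, hF, a, r, har⟩ := hC 0
  have hx : x = (ψ ∘ₗ r) (a (f (1 : A))) := by
    have h₁ : r (a (f (1 : A))) = f (1 : A) := LinearMap.congr_fun har _
    have h₂ : ψ (f (1 : A)) = (1 : A) • x := LinearMap.congr_fun hψ (1 : A)
    rw [LinearMap.comp_apply, h₁, h₂, one_smul]
  rw [hx]
  generalize a (f (1 : A)) = y
  generalize ψ ∘ₗ r = ρ
  induction y using DirectSum.induction_on with
  | zero => rw [map_zero]; exact zero_mem _
  | of j t =>
    obtain rfl := (hF j).symm
    exact Submodule.mem_iSup_of_mem (ρ ∘ₗ DirectSum.lof A (Fin k) (fun i => ↥(F i)) j) ⟨t, rfl⟩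
  | add y z hy hz => rw [map_add]; exact add_mem hy hz

/-- A module in `T^⊥`, for `T` tilting, is the cokernel of a monomorphism from a module in `T^⊥`
to a module in `Add T`. -/
lemma IsTilting.exists_shortExact {A : Type u} [Ring A] [IsNoetherianRing A]
    {T : ModuleCat.{u} A} (hT : IsTilting T) {M : ModuleCat.{u} A} (hM : ExtVanish T M) :
    ∃ (K T₀ : ModuleCat.{u} A) (s : K →ₗ[A] T₀) (p : T₀ →ₗ[A] M),
      InAdd T T₀ ∧ ExtVanish T K ∧ ShortExact s p := by
  classical
  obtain ⟨hfin, -, hTT, hres⟩ := hT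
  let T₀ := ModuleCat.of A (DirectSum (T →ₗ[A] M) fun _ => ↥T)
  let p : T₀ →ₗ[A] M := DirectSum.toModule A (T →ₗ[A] M) M fun φ => φ
  have hp (φ : T →ₗ[A] M) : p ∘ₗ DirectSum.lof A (T →ₗ[A] M) (fun _ => ↥T) φ = φ :=
    LinearMap.ext fun t =>
      DirectSum.toModule_lof A (M := fun _ : T →ₗ[A] M => ↥T) (N := M)
        (φ := fun φ => φ) φ t
  have hsurj : Function.Surjective p := by
    have hle : ⨆ φ : T →ₗ[A] M, LinearMap.range φ ≤ LinearMap.range p := iSup_le fun φ => by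
      conv_lhs => rw [← hp φ]
      exact LinearMap.range_comp_le_range _ _
    exact fun x => hle (hres.mem_span_images hM x)
  have hS : ShortExact (M₁ := ModuleCat.of A (LinearMap.ker p)) (LinearMap.ker p).subtype p :=
    ⟨Subtype.val_injective, LinearMap.exact_subtype_ker_map p, hsurj⟩
  refine ⟨_, T₀, _, p, ⟨_, LinearMap.id, LinearMap.id, rfl⟩,
    hS.extVanish_right ?_ hM fun φ => ⟨_, hp φ⟩, hS⟩
  rw [extVanish_iff] at hTT ⊢
  exact fun i => subsingleton_ext_directSum (fun _ => T) i T fun _ => hTT i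

/-- For a tilting module `T` and `M ∈ T^⊥` there is, for every `n ≥ 1`, an exact
sequence `0 → K_{n-1} → T_{n-1} → ⋯ → T_0 → M → 0` with all `T_i ∈ Add T` and all
kernels in `T^⊥` (encoded as a chain of short exact sequences). -/
theorem stmt_6 (Λ : Type u) [Ring Λ] (R : Type u) [CommRing R] [IsArtinianRing R]
    [Algebra R Λ] [Module.Finite R Λ]
    (T : ModuleCat.{u} Λᵐᵒᵖ) (hT : IsTilting T)
    (M : ModuleCat.{u} Λᵐᵒᵖ) (hM : ExtVanish T M) (n : ℕ) (hn : 1 ≤ n) :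
    ∃ K : ℕ → ModuleCat.{u} Λᵐᵒᵖ, K 0 = M ∧
      ∀ i < n, ∃ (Ti : ModuleCat.{u} Λᵐᵒᵖ)
        (s : K (i + 1) →ₗ[Λᵐᵒᵖ] Ti) (p : Ti →ₗ[Λᵐᵒᵖ] K i),
        InAdd T Ti ∧ ExtVanish T (K (i + 1)) ∧ ShortExact s p := by
  have : IsNoetherianRing Λᵐᵒᵖ := isNoetherian_of_tower R inferInstance
  choose K T₀ s p hT₀ hK hS using
    fun N : {N : ModuleCat.{u} Λᵐᵒᵖ // ExtVanish T N} => hT.exists_shortExact N.2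
  let L : ℕ → {N : ModuleCat.{u} Λᵐᵒᵖ // ExtVanish T N} :=
    fun i => Nat.rec ⟨M, hM⟩ (fun _ N => ⟨K N, hK N⟩) i
  exact ⟨fun i => (L i).1, rfl,
    fun i _ => ⟨T₀ (L i), s (L i), p (L i), hT₀ _, hK _, hS _⟩⟩
end
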